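/- Let 0 < α ≤ 2, p1, p2 > 0, P = 1/p1 + 1/p2 with α/(1+α) < P < α and P ≠ 1. Assume additionally P_{1/α,(1+α)/α} := 1/(α p1) + (1+α)/(α p2) < 1. Let g0 : ℝ²∖{0} → ℝ satisfy |g0(u)| ≤ C ρ0(u)^{P−1} and |∂_1 g0(u)| ≤ C ρ0(u)^{P−1/p1−1} = C ρ0(u)^{1/p2−1} for all u ≠ 0, where ρ0(u) = |u1|^{p1}+|u2|^{p2}. Then for every t > 0, h1(t;u) := g0(t−u1, −u2) − g0(−u1,−u2) satisfies ∫_{ℝ²} |h1(t;u)|^α du < ∞. -/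

import Mathlib

open MeasureTheory

/-- `ρ₀(u) = |u₁|^{p₁} + |u₂|^{p₂}`. -/
noncomputable def rho0 (p1 p2 : ℝ) (u : ℝ × ℝ) : ℝ := |u.1| ^ p1 + |u.2| ^ p2

/-- Partial derivative `∂₁ g`. -/
noncomputable def pd1 (g : ℝ × ℝ → ℝ) (u : ℝ × ℝ) : ℝ := deriv (fun a => g (a, u.2)) u.1

/-!
`ρ₀` is homogeneous of degree one under the dilations `(λ ^ (1 / p₁) u₁, λ ^ (1 / p₂) u₂)`, which
multiply area by `λ ^ P` with `P = 1 / p₁ + 1 / p₂`. Accordingly `ρ₀ ^ β` is integrable at the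
origin when `-P < β` and at infinity when `β < -P`; both follow by comparison with a product of
functions of `u₁` and `u₂`, because `|uᵢ| ≤ ρ₀ ^ (1 / pᵢ)`. On compact sets the increment is
controlled by the size of `g₀`. Near infinity the mean value inequality bounds it by `∂₁ g₀` along
a horizontal segment of length `t`, on which `ρ₀` stays comparable to its value at an endpoint.
-/

lemma add_rpow_le_two_rpow_mul {a b p : ℝ} (ha : 0 ≤ a) (hb : 0 ≤ b) (hp : 0 ≤ p) :
    (a + b) ^ p ≤ 2 ^ p * (a ^ p + b ^ p) := by
  wlog hab : a ≤ b generalizing a b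
  · simpa only [add_comm] using this hb ha (le_of_not_ge hab)
  calc (a + b) ^ p ≤ (2 * b) ^ p := Real.rpow_le_rpow (by positivity) (by linarith) hp
    _ = 2 ^ p * b ^ p := Real.mul_rpow two_pos.le hb
    _ ≤ 2 ^ p * (a ^ p + b ^ p) := by
        gcongr
        exact le_add_of_nonneg_left (by positivity)

section Translation

variable {G E : Type*} [SeminormedAddCommGroup G] [NormedAddCommGroup E]

lemma eventually_cobounded_forall_add {Q : G → Prop} (h : ∀ᶠ u in Bornology.cobounded G, Q u)
    (r : ℝ) : ∀ᶠ u in Bornology.cobounded G, ∀ w, ‖w‖ ≤ r → Q (u + w) := by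
  obtain ⟨R, -, hR⟩ := Filter.hasBasis_cobounded_norm.eventually_iff.1 h
  refine Filter.hasBasis_cobounded_norm.eventually_iff.2 ⟨R + r, trivial, fun u hu w hw => hR ?_⟩
  have hu' : R + r ≤ ‖u‖ := hu
  exact (by linarith : R ≤ ‖u‖ - ‖w‖).trans (norm_sub_le_norm_add u w)

lemma locallyIntegrable_norm_translate_sub_rpow [MeasurableSpace G] [BorelSpace G]
    {μ : Measure G} [μ.IsAddRightInvariant] {g : G → E} {α : ℝ} (hα : 0 ≤ α)
    (hmeas : AEStronglyMeasurable g μ) (hg : LocallyIntegrable (fun u => ‖g u‖ ^ α) μ) (w : G) :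
    LocallyIntegrable (fun u => ‖g (u + w) - g u‖ ^ α) μ := by
  have htranslate : LocallyIntegrable (fun u => ‖g (u + w)‖ ^ α) μ :=
    (locallyIntegrable_map_homeomorph (f := fun u => ‖g u‖ ^ α) (Homeomorph.addRight w)).1
      ((map_add_right_eq_self μ w).symm ▸ hg)
  have hmeas_sub : AEStronglyMeasurable (fun u => g (u + w) - g u) μ :=
    (hmeas.comp_measurePreserving (measurePreserving_add_right μ w)).sub hmeas
  refine ((htranslate.add hg).smul ((2 : ℝ) ^ α)).mono
    (hmeas_sub.norm.aemeasurable.pow_const α).aestronglyMeasurable (.of_forall fun u => ?_)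
  calc ‖‖g (u + w) - g u‖ ^ α‖ = ‖g (u + w) - g u‖ ^ α := Real.norm_of_nonneg (by positivity)
    _ ≤ (‖g (u + w)‖ + ‖g u‖) ^ α := by
        gcongr
        exact norm_sub_le _ _
    _ ≤ 2 ^ α * (‖g (u + w)‖ ^ α + ‖g u‖ ^ α) :=
        add_rpow_le_two_rpow_mul (norm_nonneg _) (norm_nonneg _) hα
    _ ≤ _ := Real.le_norm_self _

end Translation

lemma locallyIntegrable_mul_prod {X Y L : Type*} [TopologicalSpace X] [MeasurableSpace X]
    [TopologicalSpace Y] [MeasurableSpace Y] [NormedRing L] {μ : Measure X} {ν : Measure Y}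
    [SFinite μ] [SFinite ν] {f : X → L} {g : Y → L} (hf : LocallyIntegrable f μ)
    (hg : LocallyIntegrable g ν) :
    LocallyIntegrable (fun z : X × Y => f z.1 * g z.2) (μ.prod ν) := by
  rintro ⟨x, y⟩
  obtain ⟨s, hs, hfs⟩ := hf x
  obtain ⟨t, ht, hgt⟩ := hg y
  refine ⟨s ×ˢ t, prod_mem_nhds hs ht, ?_⟩
  rw [IntegrableOn, ← Measure.prod_restrict]
  exact hfs.integrable.mul_prod hgt.integrable

lemma locallyIntegrable_abs_rpow {s : ℝ} (hs : -1 < s) :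
    LocallyIntegrable fun x : ℝ => |x| ^ s := by
  refine locallyIntegrable_of_norm_le_rpow (C := 1) (α := -s) (by simp)
    (by rw [Module.finrank_self]; push_cast; linarith) (.of_forall fun x => ?_)
    (Measurable.aestronglyMeasurable (by fun_prop))
  rw [neg_neg, one_mul, Real.norm_of_nonneg (by positivity), Real.norm_eq_abs]

section Rho0

variable {p1 p2 : ℝ}

lemma rho0_nonneg (p1 p2 : ℝ) (u : ℝ × ℝ) : 0 ≤ rho0 p1 p2 u := by
  unfold rho0
  positivity

lemma continuous_rho0 (hp1 : 0 ≤ p1) (hp2 : 0 ≤ p2) : Continuous (rho0 p1 p2) :=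
  (continuous_fst.abs.rpow_const fun _ => .inr hp1).add
    (continuous_snd.abs.rpow_const fun _ => .inr hp2)

lemma one_le_rho0 (hp1 : 0 ≤ p1) (hp2 : 0 ≤ p2) {u : ℝ × ℝ} (hu : 1 ≤ ‖u‖) :
    1 ≤ rho0 p1 p2 u := by
  rcases le_max_iff.1 hu with h | h
  · exact (Real.one_le_rpow h hp1).trans (le_add_of_nonneg_right (by positivity))
  · exact (Real.one_le_rpow h hp2).trans (le_add_of_nonneg_left (by positivity))

lemma rho0_add_le (hp1 : 0 ≤ p1) (hp2 : 0 ≤ p2) (u v : ℝ × ℝ) :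
    rho0 p1 p2 (u + v) ≤ (2 ^ p1 + 2 ^ p2) * (rho0 p1 p2 u + rho0 p1 p2 v) := by
  have hcoord : ∀ {p : ℝ}, 0 ≤ p → ∀ x y : ℝ, |x + y| ^ p ≤ 2 ^ p * (|x| ^ p + |y| ^ p) :=
    fun hp x y => (Real.rpow_le_rpow (abs_nonneg _) (abs_add_le x y) hp).trans
      (add_rpow_le_two_rpow_mul (abs_nonneg x) (abs_nonneg y) hp)
  calc rho0 p1 p2 (u + v)
      ≤ 2 ^ p1 * (|u.1| ^ p1 + |v.1| ^ p1) + 2 ^ p2 * (|u.2| ^ p2 + |v.2| ^ p2) :=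
        add_le_add (hcoord hp1 _ _) (hcoord hp2 _ _)
    _ ≤ (2 ^ p1 + 2 ^ p2) * (|u.1| ^ p1 + |v.1| ^ p1) +
        (2 ^ p1 + 2 ^ p2) * (|u.2| ^ p2 + |v.2| ^ p2) := by
        gcongr
        · exact le_add_of_nonneg_right (by positivity)
        · exact le_add_of_nonneg_left (by positivity)
    _ = (2 ^ p1 + 2 ^ p2) * (rho0 p1 p2 u + rho0 p1 p2 v) := by
        unfold rho0
        ring

lemma one_add_rho0_add_le (hp1 : 0 ≤ p1) (hp2 : 0 ≤ p2) {u : ℝ × ℝ} (hu : 1 ≤ ‖u‖)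
    (w : ℝ × ℝ) :
    1 + rho0 p1 p2 (u + w) ≤
      (1 + 2 ^ p1 + 2 ^ p2) * (1 + rho0 p1 p2 w) * rho0 p1 p2 u := by
  have hu' := one_le_rho0 hp1 hp2 hu
  have hw := rho0_nonneg p1 p2 w
  calc 1 + rho0 p1 p2 (u + w)
      ≤ 1 + (2 ^ p1 + 2 ^ p2) * (rho0 p1 p2 u + rho0 p1 p2 w) := by
        gcongr
        exact rho0_add_le hp1 hp2 u w
    _ ≤ (1 + rho0 p1 p2 w) * rho0 p1 p2 u +
        (2 ^ p1 + 2 ^ p2) * ((1 + rho0 p1 p2 w) * rho0 p1 p2 u) := by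
        gcongr <;> nlinarith
    _ = _ := by ring

lemma exists_rho0_add_rpow_le (hp1 : 0 ≤ p1) (hp2 : 0 ≤ p2) {γ : ℝ} (hγ : γ ≤ 0) (r : ℝ) :
    ∃ K, ∀ u w : ℝ × ℝ, ‖w‖ ≤ r → 1 ≤ ‖u + w‖ →
      rho0 p1 p2 (u + w) ^ γ ≤ K * (1 + rho0 p1 p2 u) ^ γ := by
  set A := (1 + 2 ^ p1 + 2 ^ p2) * (1 + (|r| ^ p1 + |r| ^ p2)) with hA
  have hA_pos : 0 < A := by positivity
  refine ⟨A ^ (-γ), fun u w hw huw => ?_⟩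
  have hu := rho0_nonneg p1 p2 u
  have huw_pos : 0 < rho0 p1 p2 (u + w) := one_pos.trans_le (one_le_rho0 hp1 hp2 huw)
  have hneg_w : rho0 p1 p2 (-w) ≤ |r| ^ p1 + |r| ^ p2 := by
    have hw' : ‖-w‖ ≤ |r| := (norm_neg w).trans_le (hw.trans (le_abs_self r))
    exact add_le_add (Real.rpow_le_rpow (abs_nonneg _) ((norm_fst_le _).trans hw') hp1)
      (Real.rpow_le_rpow (abs_nonneg _) ((norm_snd_le _).trans hw') hp2)
  have hcompare : 1 + rho0 p1 p2 u ≤ A * rho0 p1 p2 (u + w) := by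
    have h := one_add_rho0_add_le hp1 hp2 huw (-w)
    rw [add_neg_cancel_right] at h
    exact h.trans (by rw [hA]; gcongr)
  calc rho0 p1 p2 (u + w) ^ γ = A ^ (-γ) * (A * rho0 p1 p2 (u + w)) ^ γ := by
        rw [Real.mul_rpow hA_pos.le huw_pos.le, ← mul_assoc, ← Real.rpow_add hA_pos,
          neg_add_cancel, Real.rpow_zero, one_mul]
    _ ≤ A ^ (-γ) * (1 + rho0 p1 p2 u) ^ γ := by
        gcongr ?_ * ?_
        exact Real.rpow_le_rpow_of_nonpos (by positivity) hcompare hγ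

lemma abs_fst_le_rho0_rpow (hp1 : 0 < p1) (p2 : ℝ) (u : ℝ × ℝ) :
    |u.1| ≤ rho0 p1 p2 u ^ (1 / p1) := by
  rw [one_div, Real.le_rpow_inv_iff_of_pos (abs_nonneg _) (rho0_nonneg p1 p2 u) hp1]
  exact le_add_of_nonneg_right (by positivity)

lemma abs_snd_le_rho0_rpow (p1 : ℝ) (hp2 : 0 < p2) (u : ℝ × ℝ) :
    |u.2| ≤ rho0 p1 p2 u ^ (1 / p2) := by
  rw [one_div, Real.le_rpow_inv_iff_of_pos (abs_nonneg _) (rho0_nonneg p1 p2 u) hp2]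
  exact le_add_of_nonneg_left (by positivity)

lemma abs_fst_mul_abs_snd_le_rho0_rpow (hp1 : 0 < p1) (hp2 : 0 < p2) (u : ℝ × ℝ) :
    |u.1| * |u.2| ≤ rho0 p1 p2 u ^ (1 / p1 + 1 / p2) := by
  rw [Real.rpow_add_of_nonneg (rho0_nonneg p1 p2 u) (by positivity) (by positivity)]
  exact mul_le_mul (abs_fst_le_rho0_rpow hp1 p2 u) (abs_snd_le_rho0_rpow p1 hp2 u)
    (abs_nonneg _) (Real.rpow_nonneg (rho0_nonneg p1 p2 u) _)

lemma one_add_abs_fst_mul_one_add_abs_snd_le (hp1 : 0 < p1) (hp2 : 0 < p2) (u : ℝ × ℝ) :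
    (1 + |u.1|) * (1 + |u.2|) ≤ 4 * (1 + rho0 p1 p2 u) ^ (1 / p1 + 1 / p2) := by
  have hρ := rho0_nonneg p1 p2 u
  have hcoord : ∀ {p x : ℝ}, 0 < p → x ≤ rho0 p1 p2 u ^ (1 / p) →
      1 + x ≤ 2 * (1 + rho0 p1 p2 u) ^ (1 / p) := fun {p x} hp hx => by
    have hp' : 0 ≤ 1 / p := by positivity
    have hone : 1 ≤ (1 + rho0 p1 p2 u) ^ (1 / p) := Real.one_le_rpow (by linarith) hp'
    have hmono : rho0 p1 p2 u ^ (1 / p) ≤ (1 + rho0 p1 p2 u) ^ (1 / p) :=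
      Real.rpow_le_rpow hρ (by linarith) hp'
    linarith
  calc (1 + |u.1|) * (1 + |u.2|)
      ≤ (2 * (1 + rho0 p1 p2 u) ^ (1 / p1)) * (2 * (1 + rho0 p1 p2 u) ^ (1 / p2)) :=
        mul_le_mul (hcoord hp1 (abs_fst_le_rho0_rpow hp1 p2 u))
          (hcoord hp2 (abs_snd_le_rho0_rpow p1 hp2 u)) (by positivity) (by positivity)
    _ = 4 * (1 + rho0 p1 p2 u) ^ (1 / p1 + 1 / p2) := by
        rw [Real.rpow_add (by positivity)]
        ring

lemma locallyIntegrable_rho0_rpow (hp1 : 0 < p1) (hp2 : 0 < p2) {β : ℝ}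
    (hβ : -(1 / p1 + 1 / p2) < β) : LocallyIntegrable fun u => rho0 p1 p2 u ^ β := by
  rcases le_or_gt 0 β with hβ0 | hβ0
  · exact ((continuous_rho0 hp1.le hp2.le).rpow_const fun _ => .inr hβ0).locallyIntegrable
  have hP : 0 < 1 / p1 + 1 / p2 := by positivity
  set δ := β / (1 / p1 + 1 / p2) with hδ
  have hδ1 : -1 < δ := by
    rw [hδ, lt_div_iff₀ hP]
    linarith
  have hdom : LocallyIntegrable fun u : ℝ × ℝ => |u.1| ^ δ * |u.2| ^ δ :=
    locallyIntegrable_mul_prod (locallyIntegrable_abs_rpow hδ1) (locallyIntegrable_abs_rpow hδ1)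
  refine hdom.mono
    ((continuous_rho0 hp1.le hp2.le).measurable.pow_const β).aestronglyMeasurable ?_
  have hfst : ∀ᵐ u : ℝ × ℝ, u.1 ≠ 0 :=
    Measure.quasiMeasurePreserving_fst.ae (Measure.ae_ne volume 0)
  have hsnd : ∀ᵐ u : ℝ × ℝ, u.2 ≠ 0 :=
    Measure.quasiMeasurePreserving_snd.ae (Measure.ae_ne volume 0)
  -- The comparison fails on the axes, where `0 ^ δ = 0`.
  filter_upwards [hfst, hsnd] with u hu1 hu2
  have hρ := rho0_nonneg p1 p2 u
  rw [Real.norm_of_nonneg (by positivity), Real.norm_of_nonneg (by positivity)]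
  calc rho0 p1 p2 u ^ β = (rho0 p1 p2 u ^ (1 / p1 + 1 / p2)) ^ δ := by
        rw [← Real.rpow_mul hρ, mul_div_cancel₀ β hP.ne']
    _ ≤ (|u.1| * |u.2|) ^ δ :=
        Real.rpow_le_rpow_of_nonpos (by positivity)
          (abs_fst_mul_abs_snd_le_rho0_rpow hp1 hp2 u) (div_nonpos_of_nonpos_of_nonneg hβ0.le hP.le)
    _ = |u.1| ^ δ * |u.2| ^ δ := Real.mul_rpow (abs_nonneg _) (abs_nonneg _)

lemma integrable_one_add_rho0_rpow (hp1 : 0 < p1) (hp2 : 0 < p2) {γ : ℝ}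
    (hγ : γ < -(1 / p1 + 1 / p2)) : Integrable fun u => (1 + rho0 p1 p2 u) ^ γ := by
  have hP : 0 < 1 / p1 + 1 / p2 := by positivity
  set δ := γ / (1 / p1 + 1 / p2) with hδ
  have hδ1 : δ < -1 := by
    rw [hδ, div_lt_iff₀ hP]
    linarith
  have hline : Integrable fun x : ℝ => (1 + |x|) ^ δ := by
    simpa only [neg_neg] using! integrable_one_add_norm (E := ℝ) (μ := volume) (r := -δ)
      (by rw [Module.finrank_self]; push_cast; linarith)
  refine ((hline.mul_prod hline).const_mul (4 ^ (-δ))).mono'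
    (((continuous_rho0 hp1.le hp2.le).measurable.const_add 1).pow_const γ).aestronglyMeasurable
    (.of_forall fun u => ?_)
  have hρ := rho0_nonneg p1 p2 u
  rw [Real.norm_of_nonneg (by positivity)]
  calc (1 + rho0 p1 p2 u) ^ γ
      = 4 ^ (-δ) * (4 * (1 + rho0 p1 p2 u) ^ (1 / p1 + 1 / p2)) ^ δ := by
        rw [Real.mul_rpow (by norm_num) (by positivity), ← Real.rpow_mul (by positivity),
          mul_div_cancel₀ γ hP.ne', ← mul_assoc, ← Real.rpow_add (by norm_num),
          neg_add_cancel, Real.rpow_zero, one_mul]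
    _ ≤ 4 ^ (-δ) * ((1 + |u.1|) * (1 + |u.2|)) ^ δ := by
        gcongr ?_ * ?_
        exact Real.rpow_le_rpow_of_nonpos (by positivity)
          (one_add_abs_fst_mul_one_add_abs_snd_le hp1 hp2 u) (by linarith)
    _ = 4 ^ (-δ) * ((1 + |u.1|) ^ δ * (1 + |u.2|) ^ δ) := by
        rw [Real.mul_rpow (by positivity) (by positivity)]

end Rho0

section HorizontalIncrement

open Filter Asymptotics

variable {E : Type*} [NormedAddCommGroup E] {p1 p2 α β γ C D : ℝ} {g : ℝ × ℝ → E}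

lemma locallyIntegrable_norm_rpow_of_le_rho0_rpow (hp1 : 0 < p1) (hp2 : 0 < p2) (hα : 0 ≤ α)
    (hβ : -(1 / p1 + 1 / p2) < α * β) (hmeas : AEStronglyMeasurable g)
    (hg : ∀ᵐ u, ‖g u‖ ≤ C * rho0 p1 p2 u ^ β) : LocallyIntegrable fun u => ‖g u‖ ^ α := by
  refine ((locallyIntegrable_rho0_rpow hp1 hp2 hβ).smul (|C| ^ α)).mono
    (hmeas.norm.aemeasurable.pow_const α).aestronglyMeasurable ?_
  filter_upwards [hg] with u hu
  have hρ := rho0_nonneg p1 p2 u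
  calc ‖‖g u‖ ^ α‖ = ‖g u‖ ^ α := Real.norm_of_nonneg (by positivity)
    _ ≤ (|C| * rho0 p1 p2 u ^ β) ^ α := by
        gcongr
        exact hu.trans (by gcongr; exact le_abs_self C)
    _ = |C| ^ α * rho0 p1 p2 u ^ (α * β) := by
        rw [Real.mul_rpow (abs_nonneg C) (by positivity), ← Real.rpow_mul hρ, mul_comm β]
    _ ≤ _ := Real.le_norm_self _

variable [NormedSpace ℝ E]

lemma norm_horizontal_increment_le {u : ℝ × ℝ} {t M : ℝ}
    (hdiff : ∀ a ∈ Set.uIcc u.1 (u.1 + t), DifferentiableAt ℝ (fun b => g (b, u.2)) a)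
    (hD : ∀ a ∈ Set.uIcc u.1 (u.1 + t), ‖deriv (fun b => g (b, u.2)) a‖ ≤ M) :
    ‖g (u + (t, 0)) - g u‖ ≤ M * |t| := by
  have hmvt := (convex_uIcc u.1 (u.1 + t)).norm_image_sub_le_of_norm_deriv_le hdiff hD
    Set.left_mem_uIcc Set.right_mem_uIcc
  simpa only [Prod.add_def, add_zero, add_sub_cancel_left, Real.norm_eq_abs] using hmvt

lemma isBigO_cocompact_horizontal_increment (hp1 : 0 ≤ p1) (hp2 : 0 ≤ p2) (hγ : γ ≤ 0)
    (hdiff : ∀ᶠ u in cocompact (ℝ × ℝ), DifferentiableAt ℝ (fun a => g (a, u.2)) u.1)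
    (hD : (fun u : ℝ × ℝ => deriv (fun a => g (a, u.2)) u.1) =O[cocompact (ℝ × ℝ)]
      fun u => rho0 p1 p2 u ^ γ) (t : ℝ) :
    (fun u => g (u + (t, 0)) - g u) =O[cocompact (ℝ × ℝ)] fun u => (1 + rho0 p1 p2 u) ^ γ := by
  rw [← Metric.cobounded_eq_cocompact] at hdiff hD ⊢
  obtain ⟨c, hc, hbound⟩ := hD.exists_nonneg
  obtain ⟨K, hK⟩ := exists_rho0_add_rpow_le hp1 hp2 hγ |t|
  have hnorm : ∀ᶠ u : ℝ × ℝ in Bornology.cobounded (ℝ × ℝ), 1 ≤ ‖u‖ :=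
    eventually_cobounded_le_norm 1
  refine .of_bound (c * K * |t|) ?_
  filter_upwards [eventually_cobounded_forall_add (hdiff.and (hbound.bound.and hnorm)) |t|]
    with u hu
  have hρ := rho0_nonneg p1 p2 u
  have hsegment : ∀ a ∈ Set.uIcc u.1 (u.1 + t), ∃ w : ℝ × ℝ, ‖w‖ ≤ |t| ∧ u + w = (a, u.2) := by
    intro a ha
    refine ⟨(a - u.1, 0), ?_, by ext <;> simp⟩
    simpa using Set.abs_sub_left_of_mem_uIcc ha
  have hslice : ∀ a ∈ Set.uIcc u.1 (u.1 + t), DifferentiableAt ℝ (fun b => g (b, u.2)) a ∧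
      ‖deriv (fun b => g (b, u.2)) a‖ ≤ c * (K * (1 + rho0 p1 p2 u) ^ γ) := by
    intro a ha
    obtain ⟨w, hw, huw⟩ := hsegment a ha
    have hKw := hK u w hw (hu w hw).2.2
    obtain ⟨hdiff_a, hderiv, -⟩ := hu w hw
    rw [Real.norm_of_nonneg (Real.rpow_nonneg (rho0_nonneg _ _ _) _)] at hderiv
    rw [huw] at hdiff_a hderiv hKw
    exact ⟨hdiff_a, hderiv.trans (mul_le_mul_of_nonneg_left hKw hc)⟩
  calc ‖g (u + (t, 0)) - g u‖ ≤ c * (K * (1 + rho0 p1 p2 u) ^ γ) * |t| :=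
        norm_horizontal_increment_le (fun a ha => (hslice a ha).1) fun a ha => (hslice a ha).2
    _ = c * K * |t| * ‖(1 + rho0 p1 p2 u) ^ γ‖ := by
        rw [Real.norm_of_nonneg (by positivity)]
        ring

theorem integrable_norm_horizontal_increment_rpow (hα : 0 < α) (hp1 : 0 < p1) (hp2 : 0 < p2)
    (hγ : α * γ < -(1 / p1 + 1 / p2)) (hmeas : AEStronglyMeasurable g)
    (hg : LocallyIntegrable fun u => ‖g u‖ ^ α)
    (hdiff : ∀ᶠ u in cocompact (ℝ × ℝ), DifferentiableAt ℝ (fun a => g (a, u.2)) u.1)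
    (hD : (fun u : ℝ × ℝ => deriv (fun a => g (a, u.2)) u.1) =O[cocompact (ℝ × ℝ)]
      fun u => rho0 p1 p2 u ^ γ) (t : ℝ) :
    Integrable fun u => ‖g (u + (t, 0)) - g u‖ ^ α := by
  have hγ0 : γ ≤ 0 := by
    have hP : 0 < 1 / p1 + 1 / p2 := by positivity
    exact (neg_of_mul_neg_right (by linarith) hα.le).le
  have hlocal := locallyIntegrable_norm_translate_sub_rpow hα.le hmeas hg (t, 0)
  refine hlocal.integrable_of_isBigO_cocompact ?_
    ((integrable_one_add_rho0_rpow hp1 hp2 hγ).integrableAtFilter _)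
  have hnonneg : ∀ u, 0 ≤ (1 + rho0 p1 p2 u) ^ γ := fun u =>
    Real.rpow_nonneg (add_nonneg zero_le_one (rho0_nonneg p1 p2 u)) γ
  refine ((isBigO_cocompact_horizontal_increment hp1.le hp2.le hγ0 hdiff hD t).norm_left.rpow hα.le
    (.of_forall hnonneg)).congr_right fun u => ?_
  rw [← Real.rpow_mul (add_nonneg zero_le_one (rho0_nonneg p1 p2 u)), mul_comm γ]

theorem stmt_12_general (hα : 0 < α) (hp1 : 0 < p1) (hp2 : 0 < p2)
    (hβ : -(1 / p1 + 1 / p2) < α * β) (hγ : α * γ < -(1 / p1 + 1 / p2))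
    (hmeas : AEStronglyMeasurable g)
    (hdiff : ∀ u : ℝ × ℝ, u ≠ 0 → DifferentiableAt ℝ (fun a => g (a, u.2)) u.1)
    (hg : ∀ u : ℝ × ℝ, u ≠ 0 → ‖g u‖ ≤ C * rho0 p1 p2 u ^ β)
    (hD : ∀ u : ℝ × ℝ, u ≠ 0 → ‖deriv (fun a => g (a, u.2)) u.1‖ ≤ D * rho0 p1 p2 u ^ γ)
    (t : ℝ) :
    Integrable fun u : ℝ × ℝ => ‖g (t - u.1, -u.2) - g (-u.1, -u.2)‖ ^ α := by
  have hne : ∀ᶠ u in cocompact (ℝ × ℝ), u ≠ 0 :=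
    Metric.cobounded_eq_cocompact (α := ℝ × ℝ) ▸ Bornology.eventually_ne_cobounded 0
  have hlocal := locallyIntegrable_norm_rpow_of_le_rho0_rpow hp1 hp2 hα.le hβ hmeas
    ((Measure.ae_ne volume 0).mono hg)
  have hderiv : (fun u : ℝ × ℝ => deriv (fun a => g (a, u.2)) u.1) =O[cocompact (ℝ × ℝ)]
      fun u => rho0 p1 p2 u ^ γ := by
    refine .of_bound D (hne.mono fun u hu => (hD u hu).trans_eq ?_)
    rw [Real.norm_of_nonneg (Real.rpow_nonneg (rho0_nonneg p1 p2 u) γ)]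
  have hincr := integrable_norm_horizontal_increment_rpow hα hp1 hp2 hγ hmeas hlocal
    (hne.mono hdiff) hderiv t
  refine hincr.comp_neg.congr (.of_forall fun u => ?_)
  have hshift : -u + (t, 0) = (t - u.1, -u.2) := by ext <;> simp [neg_add_eq_sub]
  simp only [hshift]
  rfl

end HorizontalIncrement

lemma neg_lt_mul_sub_one_iff {α P : ℝ} (hα : 0 < 1 + α) :
    -P < α * (P - 1) ↔ α / (1 + α) < P := by
  rw [div_lt_iff₀ hα]
  constructor <;> intro h <;> linarith

lemma mul_one_div_sub_one_lt_neg_iff {α : ℝ} (hα : 0 < α) (p1 p2 : ℝ) :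
    α * (1 / p2 - 1) < -(1 / p1 + 1 / p2) ↔ 1 / (α * p1) + (1 + α) / (α * p2) < 1 := by
  have hrw : 1 / (α * p1) + (1 + α) / (α * p2) = (1 / p1 + 1 / p2 + α * (1 / p2)) / α := by
    simp only [div_eq_mul_inv, mul_inv]
    ring
  rw [hrw, div_lt_one hα]
  constructor <;> intro h <;> linarith

theorem stmt_12 (α p1 p2 C : ℝ) (hα0 : 0 < α) (hα2 : α ≤ 2)
    (hp1 : 0 < p1) (hp2 : 0 < p2)
    (hPlow : α / (1 + α) < 1 / p1 + 1 / p2) (hPhigh : 1 / p1 + 1 / p2 < α)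
    (hPne : 1 / p1 + 1 / p2 ≠ 1)
    (hPc : 1 / (α * p1) + (1 + α) / (α * p2) < 1) (hC : 0 < C)
    (g0 : ℝ × ℝ → ℝ) (hmeas : Measurable g0)
    (hsm : ContDiffOn ℝ 1 g0 {(0 : ℝ × ℝ)}ᶜ)
    (hg : ∀ u : ℝ × ℝ, u ≠ 0 → |g0 u| ≤ C * rho0 p1 p2 u ^ (1 / p1 + 1 / p2 - 1))
    (hD : ∀ u : ℝ × ℝ, u ≠ 0 → |pd1 g0 u| ≤ C * rho0 p1 p2 u ^ (1 / p2 - 1)) :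
    ∀ t : ℝ, 0 < t →
      Integrable (fun u : ℝ × ℝ => |g0 (t - u.1, -u.2) - g0 (-u.1, -u.2)| ^ α) volume := by
  intro t _
  have hdiff : ∀ u : ℝ × ℝ, u ≠ 0 → DifferentiableAt ℝ (fun a => g0 (a, u.2)) u.1 := fun u hu =>
    ((hsm.differentiableOn one_ne_zero).differentiableAt
      (isOpen_compl_singleton.mem_nhds hu)).comp u.1 (by fun_prop)
  exact stmt_12_general hα0 hp1 hp2 ((neg_lt_mul_sub_one_iff (by positivity)).2 hPlow)
    ((mul_one_div_sub_one_lt_neg_iff hα0 p1 p2).2 hPc) hmeas.aestronglyMeasurable hdiff hg hD t
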